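/- The primitive fusion coincides with Leśniewski fusion: F zz x if and only if every y in zz satisfies P y x and for every y with P y x there exists v in zz with O v y. -/

import Mathlib

/-- Components of `zz`: all objects that are one of some plurality fusing to a member of `zz`. -/
def Ucomp {α : Type*} (F : Set α → α → Prop) (zz : Set α) : Set α :=
  {u | ∃ z ∈ zz, ∃ yy, F yy z ∧ u ∈ yy}

/-- Parthood defined from fusion: `x` is part of `y` iff `y` fuses some plurality containing `x`. -/
def PartF {α : Type*} (F : Set α → α → Prop) (x y : α) : Prop :=
  ∃ zz, F zz y ∧ x ∈ zz

/-- Overlap defined from the fusion-induced parthood. -/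
def OvF {α : Type*} (F : Set α → α → Prop) (x y : α) : Prop :=
  ∃ z, PartF F z x ∧ PartF F z y

/-!
If `F zz x`, then absorbing a part `y` of `x` into `zz` does not change the fusion (extF), so
(compF) yields components of `zz` whose fusion is `y`; hence `y` overlaps a member of `zz`, and `x`
is a Leśniewski fusion of `zz`. For the converse it is enough that fusions exist and that Leśniewski
fusions are unique. Uniqueness follows from strong supplementation: if every part of `x` overlaps
`y`, then every part of a fusion `s` of `x` and `y` overlaps `y`, so weak supplementation forces
`y = s`, and therefore `x` is part of `y`.
-/

section Parthood

variable {α : Type*} {P : α → α → Prop} {x y z : α} {zz : Set α}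

/-- Overlap with respect to an arbitrary parthood relation `P`, so that `OvF F` is definitionally
`Overlaps (PartF F)`. -/
def Overlaps (P : α → α → Prop) (x y : α) : Prop :=
  ∃ z, P z x ∧ P z y

/-- Leśniewski fusion with respect to an arbitrary parthood relation `P`. -/
def IsLesniewskiFusion (P : α → α → Prop) (zz : Set α) (x : α) : Prop :=
  (∀ y ∈ zz, P y x) ∧ ∀ y, P y x → ∃ v ∈ zz, Overlaps P v y

/-- Weak supplementation: every proper part of `y` misses some part of `y`, where a proper part is
encoded as a part distinct from the whole. -/
def WeaklySupplemented (P : α → α → Prop) : Prop :=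
  ∀ ⦃x y⦄, P x y → x ≠ y → ∃ z, P z y ∧ ¬ Overlaps P x z

theorem Overlaps.mono_left [IsTrans α P] (hxz : Overlaps P x z) (hxy : P x y) :
    Overlaps P y z :=
  let ⟨u, hux, huz⟩ := hxz
  ⟨u, _root_.trans hux hxy, huz⟩

theorem IsLesniewskiFusion.nonempty [Std.Refl P] (h : IsLesniewskiFusion P zz x) :
    zz.Nonempty :=
  let ⟨v, hv, _⟩ := h.2 x (refl x)
  ⟨v, hv⟩

theorem IsLesniewskiFusion.overlaps_of_forall_part [IsTrans α P]
    (hx : IsLesniewskiFusion P zz x) (hy : ∀ v ∈ zz, P v y) (hz : P z x) : Overlaps P y z :=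
  let ⟨v, hv, hvz⟩ := hx.2 z hz
  hvz.mono_left (hy v hv)

namespace WeaklySupplemented

theorem eq_of_forall_overlaps (hP : WeaklySupplemented P) (hxy : P x y)
    (hover : ∀ z, P z y → Overlaps P x z) : x = y := by
  by_contra hne
  obtain ⟨z, hzy, hxz⟩ := hP hxy hne
  exact hxz (hover z hzy)

theorem antisymm [Std.Refl P] [IsTrans α P] (hP : WeaklySupplemented P) (hxy : P x y)
    (hyx : P y x) : x = y :=
  hP.eq_of_forall_overlaps hxy fun z hzy => ⟨z, _root_.trans hzy hyx, refl z⟩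

theorem part_of_forall_overlaps [IsTrans α P] (hP : WeaklySupplemented P)
    (hfus : ∃ s, IsLesniewskiFusion P {x, y} s) (hover : ∀ z, P z x → Overlaps P y z) :
    P x y := by
  obtain ⟨s, hs⟩ := hfus
  have hxs : P x s := hs.1 x (by simp)
  have hys : P y s := hs.1 y (by simp)
  have hy_eq : y = s := hP.eq_of_forall_overlaps hys fun z hzs => by
    obtain ⟨v, rfl | rfl, hvz⟩ := hs.2 z hzs
    · obtain ⟨u, huv, huz⟩ := hvz
      obtain ⟨t, hty, htu⟩ := hover u huv
      exact ⟨t, hty, _root_.trans htu huz⟩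
    · exact hvz
  rwa [hy_eq]

theorem isLesniewskiFusion_unique [Std.Refl P] [IsTrans α P] (hP : WeaklySupplemented P)
    (hfus : ∀ a b, ∃ s, IsLesniewskiFusion P {a, b} s)
    (hx : IsLesniewskiFusion P zz x) (hy : IsLesniewskiFusion P zz y) : x = y :=
  hP.antisymm
    (hP.part_of_forall_overlaps (hfus x y) fun _ => hx.overlaps_of_forall_part hy.1)
    (hP.part_of_forall_overlaps (hfus y x) fun _ => hy.overlaps_of_forall_part hx.1)

theorem iff_isLesniewskiFusion [Std.Refl P] [IsTrans α P] (hP : WeaklySupplemented P)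
    {F : Set α → α → Prop} (exF : ∀ zz : Set α, zz.Nonempty → ∃ y, F zz y)
    (hF : ∀ zz x, F zz x → IsLesniewskiFusion P zz x) (zz : Set α) (x : α) :
    F zz x ↔ IsLesniewskiFusion P zz x := by
  refine ⟨hF zz x, fun hx => ?_⟩
  have hfus (a b : α) : ∃ s, IsLesniewskiFusion P {a, b} s :=
    (exF {a, b} (Set.insert_nonempty a {b})).imp (hF {a, b})
  obtain ⟨w, hw⟩ := exF zz hx.nonempty
  rwa [hP.isLesniewskiFusion_unique hfus hx (hF zz w hw)]

end WeaklySupplemented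

end Parthood

section PrimitiveFusion

variable {α : Type*} {F : Set α → α → Prop} {x y z : α} {zz : Set α}

/-- The axiom (extF): pluralities with a common fusion may replace each other in any fusion. -/
def ExtensionalFusion (F : Set α → α → Prop) : Prop :=
  ∀ (zz yy uu : Set α) (x v : α), F zz x → F yy x → F (uu ∪ zz) v → F (uu ∪ yy) v

theorem mem_Ucomp_singleton : z ∈ Ucomp F {x} ↔ PartF F z x := by
  constructor
  · rintro ⟨_, rfl, hz⟩
    exact hz
  · exact fun hz => ⟨x, rfl, hz⟩

theorem fusion_singleton_self (exF : ∀ zz : Set α, zz.Nonempty → ∃ y, F zz y)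
    (idF : ∀ x y : α, F {y} x → x = y) (x : α) : F {x} x := by
  obtain ⟨y, hy⟩ := exF {x} (Set.singleton_nonempty x)
  rwa [idF y x hy] at hy

theorem partF_self (hx : F {x} x) : PartF F x x :=
  ⟨{x}, hx, rfl⟩

theorem PartF.fusion_singleton_union (hxy : PartF F x y) (extF : ExtensionalFusion F)
    (hzz : F zz y) : F ({x} ∪ zz) y := by
  obtain ⟨yy, hyy, hx⟩ := hxy
  refine extF yy zz {x} y y hyy hzz ?_
  rwa [Set.singleton_union, Set.insert_eq_of_mem hx]

theorem PartF.trans (extF : ExtensionalFusion F) (hself : ∀ x, F {x} x) (hxy : PartF F x y)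
    (hyz : PartF F y z) : PartF F x z := by
  have hy : F ({x} ∪ {y}) y := hxy.fusion_singleton_union extF (hself y)
  have hz : F ({z} ∪ {y}) z := by
    rw [Set.union_comm]
    exact hyz.fusion_singleton_union extF (hself z)
  exact ⟨{z} ∪ ({x} ∪ {y}), extF {y} ({x} ∪ {y}) {z} y z (hself y) hy hz, by simp⟩

theorem isLesniewskiFusion_of_fusion (extF : ExtensionalFusion F)
    (compF : ∀ (zz : Set α) (x y : α), F (zz ∪ {x}) y → F zz y →
      ∃ vv, vv ⊆ Ucomp F zz ∧ F vv x ∧ vv.Nonempty)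
    (hx : F zz x) : IsLesniewskiFusion (PartF F) zz x := by
  refine ⟨fun y hy => ⟨zz, hx, hy⟩, fun y hyx => ?_⟩
  have hunion : F (zz ∪ {y}) x := by
    rw [Set.union_comm]
    exact hyx.fusion_singleton_union extF hx
  obtain ⟨vv, hvv, hvvy, u, hu⟩ := compF zz y x hunion hx
  obtain ⟨v, hv, huv⟩ := hvv hu
  exact ⟨v, hv, u, huv, vv, hvvy, hu⟩

theorem weaklySupplemented_partF (extF : ExtensionalFusion F)
    (exF : ∀ zz : Set α, zz.Nonempty → ∃ y, F zz y) (hself : ∀ x, F {x} x)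
    (wspF : ∀ x y : α, F ({x} ∪ {y}) y → x ≠ y →
      ∃ z ∈ Ucomp F {y}, ¬ ∃ u, F (Ucomp F {x} ∩ Ucomp F {z}) u) :
    WeaklySupplemented (PartF F) := by
  intro x y hxy hne
  obtain ⟨z, hzy, hdisj⟩ := wspF x y (hxy.fusion_singleton_union extF (hself y)) hne
  refine ⟨z, mem_Ucomp_singleton.1 hzy, fun ⟨u, hux, huz⟩ => hdisj (exF _ ⟨u, ?_⟩)⟩
  exact ⟨mem_Ucomp_singleton.2 hux, mem_Ucomp_singleton.2 huz⟩

end PrimitiveFusion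

theorem fusion_iff_lesniewski {α : Type*} (F : Set α → α → Prop)
    (exF : ∀ zz : Set α, zz.Nonempty → ∃ y, F zz y)
    (extF : ∀ (zz yy uu : Set α) (x v : α),
      F zz x → F yy x → F (uu ∪ zz) v → F (uu ∪ yy) v)
    (idF : ∀ x y : α, F {y} x → x = y)
    (compF : ∀ (zz : Set α) (x y : α), F (zz ∪ {x}) y → F zz y →
      ∃ vv, vv ⊆ Ucomp F zz ∧ F vv x ∧ vv.Nonempty)
    (wspF : ∀ x y : α, F ({x} ∪ {y}) y → x ≠ y →
      ∃ z ∈ Ucomp F {y}, ¬ ∃ u, F (Ucomp F {x} ∩ Ucomp F {z}) u) :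
    ∀ (zz : Set α) (x : α), F zz x ↔
      (∀ y ∈ zz, PartF F y x) ∧ ∀ y, PartF F y x → ∃ v ∈ zz, OvF F v y := by
  have hself : ∀ x, F {x} x := fusion_singleton_self exF idF
  have : Std.Refl (PartF F) := ⟨fun x => partF_self (hself x)⟩
  have : IsTrans α (PartF F) := ⟨fun _ _ _ => PartF.trans extF hself⟩
  have hP : WeaklySupplemented (PartF F) := weaklySupplemented_partF extF exF hself wspF
  exact hP.iff_isLesniewskiFusion exF fun _ _ => isLesniewskiFusion_of_fusion extF compF
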